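/- For every natural number t ≥ 1: every play of the reversible pebble game on t nodes that contains some configuration in which the final node t is pebbled must contain some configuration with at least ⌊log₂ t⌋ + 1 pebbled nodes. -/

import Mathlib

/- Bennett's reversible pebble game on `t` nodes numbered `1, …, t`.
A configuration is a finite set `P` of pebbled node indices (a subset of
`{1, …, t}`).  A legal move toggles the pebbled status of exactly one node
`j` with `1 ≤ j ≤ t`, provided `j = 1` or node `j - 1` is pebbled. -/
def PebbleMove (t : ℕ) (P P' : Finset ℕ) : Prop :=
  ∃ j : ℕ, 1 ≤ j ∧ j ≤ t ∧ (j = 1 ∨ j - 1 ∈ P) ∧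
    P' = (if j ∈ P then P.erase j else insert j P)

/-- A play is a finite sequence of configurations beginning with the empty
configuration, each consecutive pair related by a legal move. -/
def PebblePlay (t : ℕ) (L : List (Finset ℕ)) : Prop :=
  L.head? = some ∅ ∧ L.Chain' (PebbleMove t)

def PStep (P P' : Finset ℕ) : Prop :=
  ∃ j : ℕ, 1 ≤ j ∧ (j = 1 ∨ j - 1 ∈ P) ∧ ∀ x, x ≠ j → (x ∈ P' ↔ x ∈ P)

theorem PStep.symm {P P' : Finset ℕ} (h : PStep P P') : PStep P' P := by
  obtain ⟨j, h1, h2, h3⟩ := h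
  refine ⟨j, h1, ?_, fun x hx => (h3 x hx).symm⟩
  rcases h2 with h2 | h2
  · exact Or.inl h2
  · exact Or.inr ((h3 (j - 1) (by omega)).2 h2)

def pLow (h : ℕ) (P : Finset ℕ) : Finset ℕ := P.filter (fun x => x ≤ h)
def pHigh (h : ℕ) (P : Finset ℕ) : Finset ℕ := (P.filter (fun x => ¬ x ≤ h)).image (fun x => x - h)

theorem mem_pLow (h : ℕ) (P : Finset ℕ) (x : ℕ) : x ∈ pLow h P ↔ x ∈ P ∧ x ≤ h := by
  simp [pLow]

theorem mem_pHigh (h : ℕ) (P : Finset ℕ) (x : ℕ) : x ∈ pHigh h P ↔ 1 ≤ x ∧ x + h ∈ P := by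
  simp only [pHigh, Finset.mem_image, Finset.mem_filter]
  constructor
  · rintro ⟨a, ⟨ha, hb⟩, rfl⟩
    refine ⟨by omega, ?_⟩
    rwa [Nat.sub_add_cancel (by omega)]
  · rintro ⟨h1, h2⟩
    exact ⟨x + h, ⟨h2, by omega⟩, by omega⟩

theorem card_low_high (h : ℕ) (P : Finset ℕ) : (pLow h P).card + (pHigh h P).card = P.card := by
  rw [pHigh, Finset.card_image_of_injOn, pLow]
  · exact Finset.card_filter_add_card_filter_not _
  · intro a ha b hb hab
    simp at ha hb hab
    omega

theorem pLow_step {h : ℕ} {P P' : Finset ℕ} (hs : PStep P P') : PStep (pLow h P) (pLow h P') := by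
  obtain ⟨j, h1, h2, h3⟩ := hs
  by_cases hj : j ≤ h
  · refine ⟨j, h1, ?_, ?_⟩
    · rcases h2 with h2 | h2
      · exact Or.inl h2
      · exact Or.inr ((mem_pLow _ _ _).2 ⟨h2, by omega⟩)
    · intro x hx
      rw [mem_pLow, mem_pLow, h3 x hx]
  · refine ⟨1, le_rfl, Or.inl rfl, ?_⟩
    intro x _
    rw [mem_pLow, mem_pLow]
    by_cases hx : x = j
    · subst hx; simp [hj]
    · rw [h3 x hx]

theorem pHigh_step {h : ℕ} {P P' : Finset ℕ} (hs : PStep P P') :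
    PStep (pHigh h P) (pHigh h P') := by
  obtain ⟨j, h1, h2, h3⟩ := hs
  by_cases hj : j ≤ h
  · refine ⟨1, le_rfl, Or.inl rfl, ?_⟩
    intro x hx
    rw [mem_pHigh, mem_pHigh]
    by_cases hx0 : 1 ≤ x
    · rw [h3 _ (by omega)]
    · simp [hx0]
  · refine ⟨j - h, by omega, ?_, ?_⟩
    · by_cases hj1 : j = h + 1
      · left; omega
      · rcases h2 with h2 | h2
        · left; omega
        · right
          rw [mem_pHigh]
          refine ⟨by omega, ?_⟩
          rwa [show j - h - 1 + h = j - 1 by omega]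
    · intro x hx
      rw [mem_pHigh, mem_pHigh, h3 _ (by omega)]

theorem pHigh_empty_step {h : ℕ} (hh : 1 ≤ h) {P P' : Finset ℕ} (hs : PStep P P')
    (hP : pHigh h P = ∅) (hn : h ∉ P') : pHigh h P' = ∅ := by
  obtain ⟨j, h1, h2, h3⟩ := hs
  have hP' : ∀ x, 1 ≤ x → x + h ∉ P := by
    intro x hx hm
    have := (mem_pHigh h P x).2 ⟨hx, hm⟩
    rw [hP] at this
    simp at this
  apply Finset.eq_empty_of_forall_notMem
  intro x hx
  rw [mem_pHigh] at hx
  by_cases hxj : x + h = j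
  · rcases h2 with h2 | h2
    · omega
    · by_cases hx1 : x = 1
      · apply hn
        rw [h3 h (by omega)]
        rwa [show h = j - 1 by omega]
      · apply hP' (x - 1) (by omega)
        rwa [show x - 1 + h = j - 1 by omega]
  · exact hP' x hx.1 ((h3 _ hxj).1 hx.2)

theorem pHigh_empty_run {h : ℕ} (hh : 1 ≤ h) (f : ℕ → Finset ℕ) (a b : ℕ) (hab : a ≤ b)
    (hs : ∀ i < b, PStep (f i) (f (i + 1))) (ha : pHigh h (f a) = ∅)
    (hn : ∀ i, a < i → i ≤ b → h ∉ f i) : pHigh h (f b) = ∅ := by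
  induction b, hab using Nat.le_induction with
  | base => exact ha
  | succ b hab ih =>
    exact pHigh_empty_step hh (hs b (by omega))
      (ih (fun i hi => hs i (by omega)) (fun i h1 h2 => hn i h1 (by omega)))
      (hn _ (by omega) le_rfl)

theorem pebble_main (n : ℕ) : ∀ (f : ℕ → Finset ℕ) (T : ℕ), f 0 = ∅ →
    (∀ i < T, PStep (f i) (f (i + 1))) → (∃ x ∈ f T, 2 ^ n ≤ x) →
    ∃ i ≤ T, n + 1 ≤ (f i).card := by
  induction n with
  | zero =>
    rintro f T _ _ ⟨x, hx, _⟩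
    exact ⟨T, le_rfl, by simpa using Finset.card_pos.2 ⟨x, hx⟩⟩
  | succ n ih =>
    rintro f T h0 hs ⟨x, hx, hxn⟩
    by_contra! hcon
    have hh : 1 ≤ 2 ^ n := Nat.one_le_two_pow
    rw [pow_succ] at hxn
    obtain ⟨s, hsT, hsc⟩ := ih (fun i => pHigh (2 ^ n) (f i)) T (by simp [h0, pHigh])
      (fun i hi => pHigh_step (hs i hi))
      ⟨x - 2 ^ n, (mem_pHigh _ _ _).2 ⟨by omega, by rwa [Nat.sub_add_cancel (by omega)]⟩, by omega⟩
    have hne : pHigh (2 ^ n) (f s) ≠ ∅ := by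
      intro he
      simp [he] at hsc
    have hls : pLow (2 ^ n) (f s) = ∅ := by
      have h1 := card_low_high (2 ^ n) (f s)
      have h2 := hcon s hsT
      rw [← Finset.card_eq_zero]
      omega
    by_cases hr : ∃ r ≤ s, 2 ^ n ∈ f r
    · classical
      obtain ⟨r0, hr0, hr0m⟩ := hr
      set r := Nat.findGreatest (fun r => 2 ^ n ∈ f r) s with hrdef
      have hrs : r ≤ s := Nat.findGreatest_le s
      have hrm : 2 ^ n ∈ f r := Nat.findGreatest_spec (P := fun r => 2 ^ n ∈ f r) hr0 hr0m
      have hrn : ∀ i, r < i → i ≤ s → 2 ^ n ∉ f i := fun i h1 h2 =>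
        Nat.findGreatest_is_greatest (P := fun r => 2 ^ n ∈ f r) h1 h2
      obtain ⟨i, hi, hic⟩ := ih (fun i => pLow (2 ^ n) (f (s - i))) (s - r) (by simpa using hls)
        (by
          intro i hi
          have := (pLow_step (h := 2 ^ n) (hs (s - (i + 1)) (by omega))).symm
          rwa [show s - (i + 1) + 1 = s - i by omega] at this)
        ⟨2 ^ n, (mem_pLow _ _ _).2 ⟨by rwa [show s - (s - r) = r by omega], le_rfl⟩, le_rfl⟩
      have hu : pHigh (2 ^ n) (f (s - i)) = ∅ := by
        have h1 := card_low_high (2 ^ n) (f (s - i))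
        have h2 := hcon (s - i) (by omega)
        rw [← Finset.card_eq_zero]
        omega
      exact hne (pHigh_empty_run hh f (s - i) s (by omega) (fun k hk => hs k (by omega)) hu
        (fun k h1 h2 => hrn k (by omega) h2))
    · push Not at hr
      exact hne (pHigh_empty_run hh f 0 s (by omega) (fun k hk => hs k (by omega))
        (by simp [h0, pHigh]) (fun k h1 h2 => hr k h2))

theorem PebbleMove.pstep {t : ℕ} {P P' : Finset ℕ} (h : PebbleMove t P P') : PStep P P' := by
  obtain ⟨j, h1, _, h3, rfl⟩ := h
  refine ⟨j, h1, h3, fun x hx => ?_⟩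
  split_ifs <;> simp [hx]

/-- Every play of the reversible pebble game on `t ≥ 1` nodes containing a
configuration in which the final node `t` is pebbled must contain a
configuration with at least `⌊log₂ t⌋ + 1` pebbled nodes. -/
theorem pebble_game_final_node_lower_bound (t : ℕ) (ht : 1 ≤ t)
    (L : List (Finset ℕ)) (hL : PebblePlay t L)
    (hreach : ∃ P ∈ L, t ∈ P) :
    ∃ P ∈ L, Nat.log 2 t + 1 ≤ P.card := by
  obtain ⟨hhead, hch⟩ := hL
  obtain ⟨P, hP, htP⟩ := hreach
  obtain ⟨T, hT, rfl⟩ := List.mem_iff_getElem.1 hP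
  have hch' := List.isChain_iff_getElem.1 hch
  obtain ⟨i, hi, hc⟩ := pebble_main (Nat.log 2 t) (fun i => L.getD i ∅) T
    (by
      cases L with
      | nil => simp at hT
      | cons a l => simpa using hhead)
    (by
      intro i hi
      have h1 : i + 1 < L.length := by omega
      have h2 : i < L.length := by omega
      have := (hch' i h1).pstep
      simpa [List.getElem?_eq_getElem h1, List.getElem?_eq_getElem h2] using this)
    ⟨t, by simpa [List.getElem?_eq_getElem hT] using htP, Nat.pow_log_le_self 2 (by omega)⟩
  have h2 : i < L.length := by omega
  refine ⟨L[i], List.getElem_mem h2, ?_⟩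
  simpa [List.getElem?_eq_getElem h2] using hc
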